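/- Let (X,d) be a Polish space and f a continuous semi-flow on X. If (X,f) is chaotic, then there exists an uncountable dense subset B of X such that limsup_{t→+∞} d(f^t(x), f^t(y)) > 0 for all x, y ∈ B with x ≠ y. -/

import Mathlib

open Filter Topology Metric Set TopologicalSpace

/-- `f` is a continuous semi-flow on `X`: jointly continuous on `[0,∞) × X`,
`f 0 x = x`, and `f s (f t x) = f (s+t) x` for `s, t ≥ 0`. -/
def IsSemiflow {X : Type*} [MetricSpace X] (f : ℝ → X → X) : Prop :=
  ContinuousOn (fun p : ℝ × X => f p.1 p.2) (Set.Ici 0 ×ˢ Set.univ) ∧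
  (∀ x, f 0 x = x) ∧
  (∀ s t : ℝ, 0 ≤ s → 0 ≤ t → ∀ x, f s (f t x) = f (s + t) x)

/-- the forward orbit `O₊(f,x) = {f t x : t ≥ 0}`. -/
def posOrbit {X : Type*} [MetricSpace X] (f : ℝ → X → X) (x : X) : Set X :=
  (fun t => f t x) '' Set.Ici (0 : ℝ)

/-- `x` is Birkhoff recurrent for `f`. -/
def BirkhoffRecurrent {X : Type*} [MetricSpace X] (f : ℝ → X → X) (x : X) : Prop :=
  ∀ ε > (0:ℝ), ∃ T > (0:ℝ), ∀ τ ≥ (0:ℝ), ∀ υ ≥ (0:ℝ),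
    ∃ t : ℝ, τ < t ∧ t < τ + T ∧ dist (f υ x) (f t x) < ε

/-- `f` is topologically quasi-transitive: some forward orbit is dense. -/
def QuasiTransitive {X : Type*} [MetricSpace X] (f : ℝ → X → X) : Prop :=
  ∃ x : X, Dense (posOrbit f x)

/-- `(X,f)` is chaotic: quasi-transitive, Birkhoff recurrent points dense, and
two motions far away from each other. -/
def Chaotic {X : Type*} [MetricSpace X] (f : ℝ → X → X) : Prop :=
  QuasiTransitive f ∧ Dense {x : X | BirkhoffRecurrent f x} ∧
  ∃ x y : X, closure (posOrbit f x) ∩ closure (posOrbit f y) = ∅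

/-!
Suppose that for every `ε > 0` some nonempty open set `U` has images `f t '' U` of diameter at most
`ε` for all large `t`. Then `U` contains a point `w` with dense orbit and a recurrent point `z`,
whose orbits are eventually `ε`-close. Syndetic returns of `z` pass to `w`: whatever `x` is, there
is a `T` such that all large times on the orbit of `w` are followed within time `T` by a visit to
the `4ε`-ball around `x`. This is a closed condition on points, so every point of `X` satisfies
it, and letting `ε → 0` all orbits are dense. Hence a single non-dense orbit makes `f` sensitive,
uniformly in space and at arbitrarily large times. By sensitivity, each `x` is frequently separated
from all `y` outside a meagre set, and a transfinite recursion of length `ω₁` that steers through a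
countable basis yields the scrambled set.
-/

theorem exists_uncountable_wellFoundedLT_countable_Iio :
    ∃ (ι : Type) (_ : LinearOrder ι) (_ : WellFoundedLT ι),
      Uncountable ι ∧ ∀ i : ι, (Iio i).Countable := by
  let ι : Type := (Cardinal.aleph 1).ord.ToType
  have card_ι : Cardinal.mk ι = Cardinal.aleph 1 := Cardinal.mk_ord_toType _
  refine ⟨ι, inferInstance, inferInstance, ?_, fun i => ?_⟩
  · exact Cardinal.aleph0_lt_mk_iff.1 (card_ι ▸ Cardinal.aleph0_lt_aleph_one)
  · rw [← Cardinal.le_aleph0_iff_set_countable, ← Cardinal.lt_aleph_one_iff]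
    exact (Cardinal.mk_Iio_lt i (by simp [ι])).trans_eq card_ι

section Residual

variable {X : Type*} [TopologicalSpace X] [BaireSpace X] {r : X → X → Prop}

theorem exists_forall_mem_and_forall_lt_of_residual {ι : Type*} [Preorder ι] [WellFoundedLT ι]
    (hι : ∀ i : ι, (Iio i).Countable) (hr : ∀ x, ∀ᶠ y in residual X, r x y)
    {U : ι → Set X} (hU : ∀ i, IsOpen (U i)) (hne : ∀ i, (U i).Nonempty) :
    ∃ x : ι → X, (∀ i, x i ∈ U i) ∧ ∀ i j, i < j → r (x i) (x j) := by
  have extend : ∀ (i : ι) (x : ∀ j < i, X), ∃ y ∈ U i, ∀ j (hj : j < i), r (x j hj) y := by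
    intro i x
    have : Countable (Iio i) := (hι i).to_subtype
    have hres : ∀ᶠ y in residual X, ∀ j : Iio i, r (x j j.2) y :=
      eventually_countable_forall.2 fun j => hr _
    obtain ⟨y, hyU, hy⟩ := (dense_of_mem_residual hres).inter_open_nonempty _ (hU i) (hne i)
    exact ⟨y, hyU, fun j hj => hy ⟨j, hj⟩⟩
  choose next next_mem next_rel using extend
  let x : ι → X := wellFounded_lt.fix next
  have x_eq (i : ι) : x i = next i fun j _ => x j := wellFounded_lt.fix_eq next i
  refine ⟨x, fun i => x_eq i ▸ next_mem i _, fun i j hij => ?_⟩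
  rw [x_eq j]
  exact next_rel j (fun j _ => x j) i hij

theorem exists_dense_uncountable_pairwise_of_residual [SecondCountableTopology X] [Nonempty X]
    (hsymm : ∀ x y, r x y → r y x) (hirrefl : ∀ x, ¬ r x x)
    (hr : ∀ x, ∀ᶠ y in residual X, r x y) :
    ∃ B : Set X, Dense B ∧ ¬ B.Countable ∧ B.Pairwise r := by
  obtain ⟨ι, _, _, _, countable_Iio⟩ := exists_uncountable_wellFoundedLT_countable_Iio
  have : Nonempty (countableBasis X) := by
    obtain ⟨V, hV, -⟩ := (isBasis_countableBasis X).exists_subset_of_mem_open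
      (mem_univ (Classical.arbitrary X)) isOpen_univ
    exact ⟨V, hV⟩
  obtain ⟨e, he⟩ := exists_surjective_nat (countableBasis X)
  obtain ⟨U, hU⟩ : ∃ U : ι → countableBasis X, Function.Surjective U :=
    ⟨_, he.comp (Function.invFun_surjective (Infinite.natEmbedding ι).injective)⟩
  obtain ⟨x, hxU, hxr⟩ := exists_forall_mem_and_forall_lt_of_residual countable_Iio hr
    (fun i => isOpen_of_mem_countableBasis (U i).2)
    (fun i => nonempty_of_mem_countableBasis (U i).2)
  have hpair : Pairwise fun i j => r (x i) (x j) := fun i j hij =>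
    hij.lt_or_gt.elim (hxr i j) fun hji => hsymm _ _ (hxr j i hji)
  have hinj : Function.Injective x := fun i j hij => by
    by_contra hne
    have hrel : r (x i) (x j) := hpair hne
    exact hirrefl (x j) (hij ▸ hrel)
  refine ⟨range x, ?_, ?_, ?_⟩
  · refine (isBasis_countableBasis X).dense_iff.2 fun V hV _ => ?_
    obtain ⟨i, hi⟩ := hU ⟨V, hV⟩
    have hxV : x i ∈ V := by simpa only [hi] using hxU i
    exact ⟨x i, hxV, mem_range_self i⟩
  · intro hcount
    have : Countable (range x) := hcount.to_subtype
    exact not_countable ((Equiv.ofInjective x hinj).countable_iff.2 this)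
  · rintro _ ⟨i, rfl⟩ _ ⟨j, rfl⟩ hne
    exact hpair (ne_of_apply_ne x hne)

end Residual

section Semiflow

variable {X : Type*} [MetricSpace X] {f : ℝ → X → X} {w : X}

namespace IsSemiflow

theorem continuous_apply (hf : IsSemiflow f) {t : ℝ} (ht : 0 ≤ t) : Continuous (f t) :=
  hf.1.comp_continuous (f := fun x => (t, x)) (by fun_prop) fun _ => ⟨ht, mem_univ _⟩

theorem isSeparable_posOrbit (hf : IsSemiflow f) (x : X) : IsSeparable (posOrbit f x) := by
  have hcont : ContinuousOn (fun t => f t x) (Ici 0) :=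
    hf.1.comp (f := fun t : ℝ => (t, x)) (by fun_prop) fun _ ht => ⟨ht, mem_univ _⟩
  exact hcont.isSeparable_image (.of_separableSpace _)

theorem separableSpace (hf : IsSemiflow f) (hw : Dense (posOrbit f w)) : SeparableSpace X :=
  isSeparable_univ_iff.1 (hw.closure_eq ▸ (hf.isSeparable_posOrbit w).closure)

theorem isClosed_setOf_exists_mem_Icc (hf : IsSemiflow f) (T : ℝ) {C : Set X} (hC : IsClosed C) :
    IsClosed {x | ∃ s ∈ Icc 0 T, f s x ∈ C} := by
  let g : Icc 0 T × X → X := fun a => f a.1 a.2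
  have hg : Continuous g := hf.1.comp_continuous (f := fun a : Icc 0 T × X => ((a.1 : ℝ), a.2))
    (by fun_prop) fun a => ⟨a.1.2.1, mem_univ _⟩
  convert isClosedMap_snd_of_compactSpace _ (hC.preimage hg) using 1
  ext x
  simp [g, and_assoc]

theorem frequently_mem_of_dense_posOrbit (hf : IsSemiflow f)
    (hrec : Dense {x | BirkhoffRecurrent f x}) (hw : Dense (posOrbit f w))
    {V : Set X} (hV : IsOpen V) (hne : V.Nonempty) : ∃ᶠ t in atTop, f t w ∈ V := by
  rw [frequently_atTop]
  intro N
  obtain ⟨z, hzV, hz⟩ := hrec.inter_open_nonempty V hV hne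
  obtain ⟨ε, hε, hball⟩ := Metric.isOpen_iff.1 hV z hzV
  obtain ⟨t, ht, hzt⟩ : ∃ t > max N 0, dist z (f t z) < ε := by
    obtain ⟨T, -, hT⟩ := hz ε hε
    obtain ⟨t, ht, -, hzt⟩ := hT (max N 0) (le_max_right _ _) 0 le_rfl
    exact ⟨t, ht, by simpa only [hf.2.1] using hzt⟩
  obtain ⟨htN, ht0⟩ := max_lt_iff.1 ht
  obtain ⟨_, hs, s, hs0, rfl⟩ := hw.inter_open_nonempty (f t ⁻¹' V)
    (hV.preimage (hf.continuous_apply ht0.le)) ⟨z, hball (mem_ball'.2 hzt)⟩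
  rw [mem_Ici] at hs0
  exact ⟨t + s, by linarith, hf.2.2 t s ht0.le hs0 w ▸ hs⟩

theorem dense_setOf_dense_posOrbit (hf : IsSemiflow f)
    (hrec : Dense {x | BirkhoffRecurrent f x}) (hw : Dense (posOrbit f w)) :
    Dense {x | Dense (posOrbit f x)} := by
  refine hw.mono ?_
  rintro _ ⟨s, hs, rfl⟩
  refine dense_iff_inter_open.2 fun V hV hne => ?_
  obtain ⟨t, hst, ht⟩ :=
    frequently_atTop.1 (hf.frequently_mem_of_dense_posOrbit hrec hw hV hne) s
  have hshift : f (t - s) (f s w) = f t w := by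
    rw [hf.2.2 _ _ (sub_nonneg.2 hst) hs, sub_add_cancel]
  exact ⟨f t w, ht, t - s, sub_nonneg.2 hst, hshift⟩

theorem mem_of_eventually_mem_of_isClosed (hf : IsSemiflow f)
    (hrec : Dense {x | BirkhoffRecurrent f x}) (hw : Dense (posOrbit f w))
    {C : Set X} (hC : IsClosed C) (hwC : ∀ᶠ t in atTop, f t w ∈ C) (p : X) : p ∈ C := by
  by_contra hp
  exact hf.frequently_mem_of_dense_posOrbit hrec hw hC.isOpen_compl ⟨p, hp⟩
    (hwC.mono fun _ h => not_not.2 h)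

theorem exists_dist_le_of_eventually_dist_le (hf : IsSemiflow f)
    (hrec : Dense {x | BirkhoffRecurrent f x}) (hw : Dense (posOrbit f w))
    {z : X} (hz : BirkhoffRecurrent f z) {ε : ℝ} (hε : 0 < ε)
    (hwz : ∀ᶠ t in atTop, dist (f t w) (f t z) ≤ ε) (p x : X) :
    ∃ s ≥ 0, dist (f s p) x ≤ 4 * ε := by
  obtain ⟨T, -, hT⟩ := hz ε hε
  obtain ⟨N, hN⟩ := eventually_atTop.1 hwz
  obtain ⟨r, hr, hrx⟩ : ∃ r ≥ max N 0, f r w ∈ ball x ε :=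
    frequently_atTop.1 (hf.frequently_mem_of_dense_posOrbit hrec hw isOpen_ball
      (nonempty_ball.2 hε)) _
  obtain ⟨hrN, hr0⟩ := max_le_iff.1 hr
  have hreturn : ∀ᶠ t in atTop, f t w ∈ {v | ∃ s ∈ Icc 0 T, f s v ∈ closedBall x (4 * ε)} := by
    filter_upwards [eventually_ge_atTop N, eventually_ge_atTop 0] with t htN ht0
    obtain ⟨u, htu, huT, hu⟩ := hT t ht0 r hr0
    refine ⟨u - t, ⟨by linarith, by linarith⟩, ?_⟩
    rw [hf.2.2 _ _ (by linarith) ht0, sub_add_cancel, mem_closedBall]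
    calc dist (f u w) x
        ≤ dist (f u w) (f u z) + dist (f u z) (f r z) + dist (f r z) (f r w)
            + dist (f r w) x := by
          linarith [dist_triangle4 (f u w) (f u z) (f r z) x, dist_triangle (f r z) (f r w) x]
      _ ≤ ε + ε + ε + ε := by
          gcongr
          · exact hN u (by linarith)
          · exact dist_comm (f u z) (f r z) ▸ hu.le
          · exact dist_comm (f r z) (f r w) ▸ hN r hrN
          · exact (mem_ball.1 hrx).le
      _ = 4 * ε := by ring
  obtain ⟨s, hs, hsx⟩ := hf.mem_of_eventually_mem_of_isClosed hrec hw
    (hf.isClosed_setOf_exists_mem_Icc T isClosed_closedBall) hreturn p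
  exact ⟨s, hs.1, hsx⟩

end IsSemiflow

/-- Sensitivity at arbitrarily large times with constant `ε`: every nonempty open set has images of
diameter greater than `ε` under `f t` for an unbounded set of `t`. The pair of points witnessing
this may depend on `t`. -/
def FrequentlySensitive (f : ℝ → X → X) (ε : ℝ) : Prop :=
  ∀ U : Set X, IsOpen U → U.Nonempty →
    ∃ᶠ t in atTop, ∃ y ∈ U, ∃ z ∈ U, ε < dist (f t y) (f t z)

theorem IsSemiflow.exists_frequentlySensitive (hf : IsSemiflow f) (htrans : QuasiTransitive f)
    (hrec : Dense {x | BirkhoffRecurrent f x}) {p : X} (hp : ¬ Dense (posOrbit f p)) :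
    ∃ ε > 0, FrequentlySensitive f ε := by
  obtain ⟨w₀, hw₀⟩ := htrans
  contrapose! hp with hstable
  refine Metric.dense_iff.2 fun x δ hδ => ?_
  obtain ⟨U, hU, hne, hUε⟩ : ∃ U : Set X, IsOpen U ∧ U.Nonempty ∧
      ∀ᶠ t in atTop, ∀ y ∈ U, ∀ z ∈ U, dist (f t y) (f t z) ≤ δ / 5 := by
    simpa [FrequentlySensitive] using hstable (δ / 5) (by positivity)
  obtain ⟨z, hzU, hz⟩ := hrec.inter_open_nonempty U hU hne
  obtain ⟨w, hwU, hw⟩ := (hf.dense_setOf_dense_posOrbit hrec hw₀).inter_open_nonempty U hU hne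
  obtain ⟨s, hs, hsx⟩ := hf.exists_dist_le_of_eventually_dist_le hrec hw hz (by positivity)
    (hUε.mono fun t ht => ht w hwU z hzU) p x
  exact ⟨f s p, mem_ball.2 (by linarith), s, hs, rfl⟩

theorem FrequentlySensitive.eventually_residual (hf : IsSemiflow f) {ε : ℝ}
    (hsens : FrequentlySensitive f ε) (x : X) :
    ∀ᶠ y in residual X, ∃ᶠ t in atTop, ε / 2 < dist (f t x) (f t y) := by
  let F (N : ℕ) : Set X := {y | ∀ t ≥ (N : ℝ), dist (f t x) (f t y) ≤ ε / 2}
  have F_closed (N : ℕ) : IsClosed (F N) := by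
    simp only [F, ofPred_forall]
    refine isClosed_iInter fun t => isClosed_iInter fun ht => ?_
    have := hf.continuous_apply ((Nat.cast_nonneg N).trans ht)
    exact isClosed_le (by fun_prop) continuous_const
  have F_nowhereDense (N : ℕ) : IsNowhereDense (F N) := by
    rw [(F_closed N).isNowhereDense_iff, ← not_nonempty_iff_eq_empty]
    intro hne
    obtain ⟨t, ht, y, hy, z, hz, hyz⟩ := frequently_atTop.1 (hsens _ isOpen_interior hne) N
    linarith [interior_subset hy t ht, interior_subset hz t ht,
      dist_triangle_left (f t y) (f t z) (f t x)]
  have hmeagre : IsMeagre (⋃ N, F N) := isMeagre_iUnion fun N => (F_nowhereDense N).isMeagre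
  filter_upwards [hmeagre] with y hy
  refine frequently_atTop.2 fun a => ?_
  obtain ⟨N, hN⟩ := exists_nat_ge a
  obtain ⟨t, ht, hlt⟩ : ∃ t ≥ (N : ℝ), ε / 2 < dist (f t x) (f t y) := by
    by_contra! hle
    exact hy (mem_iUnion.2 ⟨N, hle⟩)
  exact ⟨t, hN.trans ht, hlt⟩

theorem Chaotic.exists_not_dense_posOrbit (hc : Chaotic f) :
    ∃ p, ¬ Dense (posOrbit f p) := by
  obtain ⟨-, -, p, q, hpq⟩ := hc
  refine ⟨p, fun hp => ?_⟩
  rw [hp.closure_eq, univ_inter, closure_empty_iff] at hpq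
  exact (nonempty_Ici.image _).ne_empty hpq

theorem chaotic_uncountable_scrambled_general [BaireSpace X] (hf : IsSemiflow f)
    (htrans : QuasiTransitive f) (hrec : Dense {x | BirkhoffRecurrent f x})
    (hnd : ∃ p, ¬ Dense (posOrbit f p)) :
    ∃ ε > (0 : ℝ), ∃ B : Set X, Dense B ∧ ¬ B.Countable ∧
      B.Pairwise fun x y =>
        (ε : EReal) ≤ limsup (fun t => (dist (f t x) (f t y) : EReal)) atTop := by
  obtain ⟨p, hp⟩ := hnd
  have : Nonempty X := ⟨p⟩
  have : SeparableSpace X := hf.separableSpace htrans.choose_spec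
  have : SecondCountableTopology X := UniformSpace.secondCountable_of_separable X
  obtain ⟨ε, hε, hsens⟩ := hf.exists_frequentlySensitive htrans hrec hp
  obtain ⟨B, hdense, hunc, hB⟩ := exists_dense_uncountable_pairwise_of_residual
    (r := fun x y => ∃ᶠ t in atTop, ε / 2 < dist (f t x) (f t y))
    (fun x y h => by simpa only [dist_comm] using h)
    (fun x => by simp [(half_pos hε).le])
    (hsens.eventually_residual hf)
  refine ⟨ε / 2, half_pos hε, B, hdense, hunc, hB.mono' fun x y h => ?_⟩
  exact le_limsup_of_frequently_le' (h.mono fun t ht => EReal.coe_le_coe_iff.2 ht.le)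

end Semiflow

/-- If `(X,f)` is chaotic then there is an uncountable dense
`u`-scrambled set. -/
theorem chaotic_uncountable_scrambled {X : Type*} [MetricSpace X] [CompleteSpace X]
    [SeparableSpace X] (f : ℝ → X → X) (hf : IsSemiflow f) (hc : Chaotic f) :
    ∃ B : Set X, Dense B ∧ ¬ B.Countable ∧
      ∀ x ∈ B, ∀ y ∈ B, x ≠ y →
        0 < Filter.limsup (fun t : ℝ => (dist (f t x) (f t y) : EReal)) Filter.atTop := by
  obtain ⟨ε, hε, B, hdense, hunc, hB⟩ :=
    chaotic_uncountable_scrambled_general hf hc.1 hc.2.1 hc.exists_not_dense_posOrbit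
  exact ⟨B, hdense, hunc, fun x hx y hy hxy => (EReal.coe_pos.2 hε).trans_le (hB hx hy hxy)⟩
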